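/- Suppose t₀ = min 𝕋 and Ω = ℝⁿ. If f satisfies (H∞) and (H^glob_Lip), then the non shifted Δ-Cauchy problem (Δ-CP) has a unique maximal solution (q,I_𝕋), and this maximal solution is global, i.e. I_𝕋 = 𝕋. -/

import Mathlib

/-!
The idea is to transfer the problem to Lebesgue integrals on real intervals `[t₀, b]` with `b ∈ T`.
Let `p = tsProj T t₀` send a real `s ≥ t₀` to the largest point of `T` below it. On `[t₀, b] \ T` the
projection takes values in right-scattered points and is constant on each gap `[r, σ(r))`, so
`∫_{[t₀,t)_T} g Δτ = ∫_{t₀}^t g(p(s)) ds`, and `p` pulls `Δ`-null sets back to Lebesgue-null sets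
(`ae_comp_tsProj`). The hypotheses on `f` therefore become a measurability, an almost everywhere
Lipschitz and a boundedness hypothesis on `s ↦ f x (p s)`.

The Cauchy problem on `[t₀, b]_T` is equivalent to the integral equation
`u(t) = q₀ + ∫_{t₀}^t f(u(p(s)), p(s)) ds` for `t ∈ T` (`isSolIcc_iff_isIntSol`). That a solution of
the integral equation solves the Cauchy problem is `primitive_ac_and_hasDeltaDerivAt`: at
right-dense points this is Lebesgue's differentiation theorem, and at right-scattered points the
integrand is constant on the gap. The converse needs that an absolutely continuous `w` on `T` with
`w^Δ = 0` almost everywhere is constant (`DeltaAC.eq_of_ae_hasDeltaDerivAt_zero`). Such a `w` does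
not jump at right-scattered points, so `w ∘ p` is an absolutely continuous function on `[t₀, b]` with
almost everywhere vanishing derivative.

Because `p(s) ≤ s`, the Picard operator of the integral equation is a contraction on the continuous
functions on `[t₀, b]` for an exponentially weighted norm (`exists_unique_continuous_solution`). This
gives a unique solution on each `[t₀, b]_T`, with no smallness condition on `b`. These solutions glue
to a global one, which extends every solution, hence is the only maximal one.
-/

open MeasureTheory Set Filter Classical

noncomputable section
open scoped Classical

/-- The forward jump operator `σ` of a time scale `T`. -/
def tsSigma (T : Set ℝ) (t : ℝ) : ℝ :=
  if ({s | s ∈ T ∧ t < s}).Nonempty then sInf {s | s ∈ T ∧ t < s} else t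

/-- The backward jump operator `ρ` of a time scale `T`. -/
def tsRho (T : Set ℝ) (t : ℝ) : ℝ :=
  if ({s | s ∈ T ∧ s < t}).Nonempty then sSup {s | s ∈ T ∧ s < t} else t

/-- The graininess function `μ(t) = σ(t) - t`. -/
def tsGrain (T : Set ℝ) (t : ℝ) : ℝ := tsSigma T t - t

/-- `t` is a right-scattered point of `T`. -/
def RightScattered (T : Set ℝ) (t : ℝ) : Prop := t < tsSigma T t

/-- `t` is a right-dense point of `T`. -/
def RightDense (T : Set ℝ) (t : ℝ) : Prop := tsSigma T t = t

/-- `t` is a left-scattered point of `T`. -/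
def LeftScattered (T : Set ℝ) (t : ℝ) : Prop := tsRho T t < t

/-- `t` is a left-dense point of `T`. -/
def LeftDense (T : Set ℝ) (t : ℝ) : Prop := tsRho T t = t

/-- `𝕋 \ {sup 𝕋}`: the time scale minus its maximum (if the maximum exists). -/
def tsUpDomain (T : Set ℝ) : Set ℝ := {t | t ∈ T ∧ ¬ IsGreatest T t}

/-- The Lebesgue Δ-measure on the time scale `T`: Lebesgue measure restricted to `T`
plus `Σ_{r ∈ ℛ} μ(r)·δ_r` over right-scattered points `r`. -/
def deltaMeasure (T : Set ℝ) : Measure ℝ :=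
  volume.restrict T +
    Measure.sum (fun r : {t : ℝ // t ∈ T ∧ RightScattered T t} =>
      ENNReal.ofReal (tsGrain T r.1) • Measure.dirac r.1)

/-- Δ-differentiability of `q` at `t`, with Δ-derivative `q'`. -/
def HasDeltaDerivAt {n : ℕ} (T : Set ℝ) (q : ℝ → EuclideanSpace ℝ (Fin n))
    (q' : EuclideanSpace ℝ (Fin n)) (t : ℝ) : Prop :=
  ∀ ε > (0:ℝ), ∃ U ∈ nhds t, ∀ s ∈ U ∩ T,
    ‖q (tsSigma T t) - q s - (tsSigma T t - s) • q'‖ ≤ ε * |tsSigma T t - s|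

/-- Absolute continuity of `q` on `[a,b]_𝕋`. -/
def DeltaAC {n : ℕ} (T : Set ℝ) (a b : ℝ) (q : ℝ → EuclideanSpace ℝ (Fin n)) : Prop :=
  ∀ ε > (0:ℝ), ∃ δ > (0:ℝ), ∀ (m : ℕ) (u v : ℕ → ℝ),
    (∀ k < m, u k ∈ Icc a b ∩ T) → (∀ k < m, v k ∈ Icc a b ∩ T) →
    (∀ k < m, u k ≤ v k) →
    (∀ i < m, ∀ j < m, i ≠ j → Disjoint (Icc (u i) (v i)) (Icc (u j) (v j))) →
    (∑ k ∈ Finset.range m, (v k - u k)) < δ →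
    (∑ k ∈ Finset.range m, ‖q (v k) - q (u k)‖) < ε

/-- `f` is a Δ-Carathéodory function on `Ω × 𝕋\{sup 𝕋}`. -/
def DeltaCaratheodory {n : ℕ} (T : Set ℝ) (Ω : Set (EuclideanSpace ℝ (Fin n)))
    (f : EuclideanSpace ℝ (Fin n) → ℝ → EuclideanSpace ℝ (Fin n)) : Prop :=
  (∀ x ∈ Ω, AEMeasurable (fun t => f x t) ((deltaMeasure T).restrict (tsUpDomain T))) ∧
    ∀ᵐ t ∂((deltaMeasure T).restrict (tsUpDomain T)), ContinuousOn (fun x => f x t) Ω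

/-- Hypothesis (H∞): `f` is locally bounded. -/
def HInfty {n : ℕ} (T : Set ℝ) (Ω : Set (EuclideanSpace ℝ (Fin n)))
    (f : EuclideanSpace ℝ (Fin n) → ℝ → EuclideanSpace ℝ (Fin n)) : Prop :=
  ∀ K : Set (EuclideanSpace ℝ (Fin n)), K ⊆ Ω → IsCompact K →
    ∀ a ∈ T, ∀ b ∈ T, a < b →
      ∃ M : ℝ, 0 ≤ M ∧
        ∀ᵐ t ∂((deltaMeasure T).restrict (Ico a b ∩ T)), ∀ x ∈ K, ‖f x t‖ ≤ M

/-- Hypothesis (H^rd_loc-Lip): local Lipschitz continuity at right-dense points. -/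
def HrdLocLip {n : ℕ} (T : Set ℝ) (Ω : Set (EuclideanSpace ℝ (Fin n)))
    (f : EuclideanSpace ℝ (Fin n) → ℝ → EuclideanSpace ℝ (Fin n)) : Prop :=
  ∀ xb ∈ Ω, ∀ tb ∈ T, ¬ IsGreatest T tb → RightDense T tb →
    ∃ R > (0:ℝ), ∃ δ > (0:ℝ), ∃ L : ℝ, 0 ≤ L ∧
      Metric.closedBall xb R ⊆ Ω ∧ tb + δ ∈ T ∧
      ∀ᵐ t ∂((deltaMeasure T).restrict (Ico tb (tb + δ) ∩ T)),
        ∀ x₁ ∈ Metric.closedBall xb R, ∀ x₂ ∈ Metric.closedBall xb R,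
          ‖f x₁ t - f x₂ t‖ ≤ L * ‖x₁ - x₂‖

/-- Hypothesis (H^ld_loc-Lip): local Lipschitz continuity at left-dense points. -/
def HldLocLip {n : ℕ} (T : Set ℝ) (Ω : Set (EuclideanSpace ℝ (Fin n)))
    (f : EuclideanSpace ℝ (Fin n) → ℝ → EuclideanSpace ℝ (Fin n)) : Prop :=
  ∀ xb ∈ Ω, ∀ tb ∈ T, ¬ IsLeast T tb → LeftDense T tb →
    ∃ R > (0:ℝ), ∃ δ > (0:ℝ), ∃ L : ℝ, 0 ≤ L ∧
      Metric.closedBall xb R ⊆ Ω ∧ tb - δ ∈ T ∧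
      ∀ᵐ t ∂((deltaMeasure T).restrict (Ico (tb - δ) tb ∩ T)),
        ∀ x₁ ∈ Metric.closedBall xb R, ∀ x₂ ∈ Metric.closedBall xb R,
          ‖f x₁ t - f x₂ t‖ ≤ L * ‖x₁ - x₂‖

/-- Hypothesis (H^forw_stab): `G⁺(t) : x ↦ x + μ(t) f(x,t)` maps `Ω` into `Ω`. -/
def HforwStab {n : ℕ} (T : Set ℝ) (Ω : Set (EuclideanSpace ℝ (Fin n)))
    (f : EuclideanSpace ℝ (Fin n) → ℝ → EuclideanSpace ℝ (Fin n)) : Prop :=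
  ∀ t ∈ T, RightScattered T t → ∀ x ∈ Ω, x + tsGrain T t • f x t ∈ Ω

/-- Hypothesis (H^back_regr): `G⁺(t)` is a bijection from `Ω` onto `ℝⁿ`. -/
def HbackRegr {n : ℕ} (T : Set ℝ) (Ω : Set (EuclideanSpace ℝ (Fin n)))
    (f : EuclideanSpace ℝ (Fin n) → ℝ → EuclideanSpace ℝ (Fin n)) : Prop :=
  ∀ t ∈ T, RightScattered T t → Set.BijOn (fun x => x + tsGrain T t • f x t) Ω univ

/-- Hypothesis (H^back_stab): `G⁻(t) : x ↦ x - μ(t) f(x,t)` maps `Ω` into `Ω`. -/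
def HbackStab {n : ℕ} (T : Set ℝ) (Ω : Set (EuclideanSpace ℝ (Fin n)))
    (f : EuclideanSpace ℝ (Fin n) → ℝ → EuclideanSpace ℝ (Fin n)) : Prop :=
  ∀ t ∈ T, RightScattered T t → ∀ x ∈ Ω, x - tsGrain T t • f x t ∈ Ω

/-- Hypothesis (H^forw_regr): `G⁻(t)` is a bijection from `Ω` onto `ℝⁿ`. -/
def HforwRegr {n : ℕ} (T : Set ℝ) (Ω : Set (EuclideanSpace ℝ (Fin n)))
    (f : EuclideanSpace ℝ (Fin n) → ℝ → EuclideanSpace ℝ (Fin n)) : Prop :=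
  ∀ t ∈ T, RightScattered T t → Set.BijOn (fun x => x - tsGrain T t • f x t) Ω univ

/-- Hypothesis (H^glob_Lip): global Lipschitz continuity. -/
def HglobLip {n : ℕ} (T : Set ℝ) (Ω : Set (EuclideanSpace ℝ (Fin n)))
    (f : EuclideanSpace ℝ (Fin n) → ℝ → EuclideanSpace ℝ (Fin n)) : Prop :=
  ∃ L : ℝ, 0 ≤ L ∧
    ∀ᵐ t ∂((deltaMeasure T).restrict (tsUpDomain T)),
      ∀ x₁ ∈ Ω, ∀ x₂ ∈ Ω, ‖f x₁ t - f x₂ t‖ ≤ L * ‖x₁ - x₂‖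

/-- The relation `a ⊴ t₀ ⊴ b`. -/
def Trile (T : Set ℝ) (t₀ a b : ℝ) : Prop :=
  (IsLeast T t₀ ∧ a = t₀ ∧ t₀ < b) ∨
  (IsGreatest T t₀ ∧ a < t₀ ∧ t₀ = b) ∨
  (¬ IsLeast T t₀ ∧ ¬ IsGreatest T t₀ ∧ a < t₀ ∧ t₀ < b)

/-- `(q, [a,b]_𝕋)` is a solution of the non shifted Δ-Cauchy problem (Δ-CP). -/
def IsSolIcc {n : ℕ} (T : Set ℝ) (Ω : Set (EuclideanSpace ℝ (Fin n)))
    (f : EuclideanSpace ℝ (Fin n) → ℝ → EuclideanSpace ℝ (Fin n))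
    (t₀ : ℝ) (q₀ : EuclideanSpace ℝ (Fin n))
    (q : ℝ → EuclideanSpace ℝ (Fin n)) (a b : ℝ) : Prop :=
  (∀ t ∈ Icc a b ∩ T, q t ∈ Ω) ∧ DeltaAC T a b q ∧ q t₀ = q₀ ∧
    ∀ᵐ t ∂((deltaMeasure T).restrict (Ico a b ∩ T)),
      HasDeltaDerivAt T q (f (q t) t) t

/-- `(q, [a,b]_𝕋)` is a solution of the shifted Δ-Cauchy problem (Δ-CP^σ). -/
def IsSolIccS {n : ℕ} (T : Set ℝ) (Ω : Set (EuclideanSpace ℝ (Fin n)))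
    (f : EuclideanSpace ℝ (Fin n) → ℝ → EuclideanSpace ℝ (Fin n))
    (t₀ : ℝ) (q₀ : EuclideanSpace ℝ (Fin n))
    (q : ℝ → EuclideanSpace ℝ (Fin n)) (a b : ℝ) : Prop :=
  (∀ t ∈ Icc a b ∩ T, q t ∈ Ω) ∧ DeltaAC T a b q ∧ q t₀ = q₀ ∧
    ∀ᵐ t ∂((deltaMeasure T).restrict (Ico a b ∩ T)),
      HasDeltaDerivAt T q (f (q (tsSigma T t)) t) t

/-- `I_𝕋 ∈ 𝕀`: `I` is a real interval containing points `a, b` of `T` with `a ⊴ t₀ ⊴ b`. -/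
def MemI (T : Set ℝ) (t₀ : ℝ) (I : Set ℝ) : Prop :=
  I.OrdConnected ∧ ∃ a ∈ I ∩ T, ∃ b ∈ I ∩ T, Trile T t₀ a b

/-- `(q, I_𝕋)` is a solution of (Δ-CP). -/
def IsSol {n : ℕ} (T : Set ℝ) (Ω : Set (EuclideanSpace ℝ (Fin n)))
    (f : EuclideanSpace ℝ (Fin n) → ℝ → EuclideanSpace ℝ (Fin n))
    (t₀ : ℝ) (q₀ : EuclideanSpace ℝ (Fin n))
    (q : ℝ → EuclideanSpace ℝ (Fin n)) (I : Set ℝ) : Prop :=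
  MemI T t₀ I ∧ (∀ t ∈ I ∩ T, q t ∈ Ω) ∧
    ∀ a ∈ I ∩ T, ∀ b ∈ I ∩ T, Trile T t₀ a b → IsSolIcc T Ω f t₀ q₀ q a b

/-- `(q, I_𝕋)` is a solution of (Δ-CP^σ). -/
def IsSolS {n : ℕ} (T : Set ℝ) (Ω : Set (EuclideanSpace ℝ (Fin n)))
    (f : EuclideanSpace ℝ (Fin n) → ℝ → EuclideanSpace ℝ (Fin n))
    (t₀ : ℝ) (q₀ : EuclideanSpace ℝ (Fin n))
    (q : ℝ → EuclideanSpace ℝ (Fin n)) (I : Set ℝ) : Prop :=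
  MemI T t₀ I ∧ (∀ t ∈ I ∩ T, q t ∈ Ω) ∧
    ∀ a ∈ I ∩ T, ∀ b ∈ I ∩ T, Trile T t₀ a b → IsSolIccS T Ω f t₀ q₀ q a b

/-- `(q₁, I₁_𝕋)` is an extension of `(q, I_𝕋)`. -/
def SolExtends {n : ℕ} (T : Set ℝ) (q₁ : ℝ → EuclideanSpace ℝ (Fin n)) (I₁ : Set ℝ)
    (q : ℝ → EuclideanSpace ℝ (Fin n)) (I : Set ℝ) : Prop :=
  I ∩ T ⊆ I₁ ∩ T ∧ EqOn q₁ q (I ∩ T)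

/-- `(q, I_𝕋)` is a maximal solution of (Δ-CP). -/
def IsMaxSol {n : ℕ} (T : Set ℝ) (Ω : Set (EuclideanSpace ℝ (Fin n)))
    (f : EuclideanSpace ℝ (Fin n) → ℝ → EuclideanSpace ℝ (Fin n))
    (t₀ : ℝ) (q₀ : EuclideanSpace ℝ (Fin n))
    (q : ℝ → EuclideanSpace ℝ (Fin n)) (I : Set ℝ) : Prop :=
  IsSol T Ω f t₀ q₀ q I ∧
    ∀ q₁ I₁, IsSol T Ω f t₀ q₀ q₁ I₁ → SolExtends T q₁ I₁ q I → I₁ ∩ T = I ∩ T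

/-- `(q, I_𝕋)` is a maximal solution of (Δ-CP^σ). -/
def IsMaxSolS {n : ℕ} (T : Set ℝ) (Ω : Set (EuclideanSpace ℝ (Fin n)))
    (f : EuclideanSpace ℝ (Fin n) → ℝ → EuclideanSpace ℝ (Fin n))
    (t₀ : ℝ) (q₀ : EuclideanSpace ℝ (Fin n))
    (q : ℝ → EuclideanSpace ℝ (Fin n)) (I : Set ℝ) : Prop :=
  IsSolS T Ω f t₀ q₀ q I ∧
    ∀ q₁ I₁, IsSolS T Ω f t₀ q₀ q₁ I₁ → SolExtends T q₁ I₁ q I → I₁ ∩ T = I ∩ T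

/-! ### A delayed integral equation with Carathéodory right-hand side -/

/-- Carathéodory composition: if `F` is measurable in time and Lipschitz in space, then
`s ↦ F (u s) s` is measurable for measurable `u`. For simple `u` it is a finite sum of truncations
of the functions `F y`; the general case is a pointwise limit. -/
theorem aesm_comp {E : Type*} [NormedAddCommGroup E] {F : E → ℝ → E} {m : Measure ℝ}
    (hm : ∀ x, AEStronglyMeasurable (F x) m) {L : ℝ}
    (hL : ∀ᵐ s ∂m, ∀ x y, ‖F x s - F y s‖ ≤ L * ‖x - y‖)
    {u : ℝ → E} (hu : AEStronglyMeasurable u m) :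
    AEStronglyMeasurable (fun s => F (u s) s) m := by
  wlog hsu : StronglyMeasurable u generalizing u
  · refine (this hu.stronglyMeasurable_mk.aestronglyMeasurable hu.stronglyMeasurable_mk).congr ?_
    filter_upwards [hu.ae_eq_mk] with s hs
    rw [← hs]
  refine aestronglyMeasurable_of_tendsto_ae atTop
    (f := fun k s => F (hsu.approx k s) s) (fun k => ?_) ?_
  · have h : (fun s => F (hsu.approx k s) s) = fun s => ∑ y ∈ (hsu.approx k).range,
        ((hsu.approx k) ⁻¹' {y}).indicator (F y) s := by
      ext s
      rw [Finset.sum_eq_single (hsu.approx k s)]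
      · simp
      · intro y _ hy
        exact indicator_of_notMem (by simpa using Ne.symm hy) _
      · intro h
        exact absurd (SimpleFunc.mem_range_self _ _) h
    rw [h]
    exact Finset.aestronglyMeasurable_fun_sum _ fun y _ =>
      (hm y).indicator (SimpleFunc.measurableSet_fiber _ _)
  · filter_upwards [hL] with s hs
    have h1 := hsu.tendsto_approx s
    rw [tendsto_iff_norm_sub_tendsto_zero] at h1 ⊢
    exact squeeze_zero (fun _ => norm_nonneg _) (fun k => hs _ _) (by simpa using h1.const_mul L)

theorem intervalIntegrable_comp {E : Type*} [NormedAddCommGroup E] {F : E → ℝ → E} {a b : ℝ}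
    (hab : a ≤ b)
    (hm : ∀ x, AEStronglyMeasurable (F x) (volume.restrict (Ioc a b))) {L M C : ℝ} (hL0 : 0 ≤ L)
    (hL : ∀ᵐ s ∂(volume.restrict (Ioc a b)), ∀ x y, ‖F x s - F y s‖ ≤ L * ‖x - y‖)
    (hM : ∀ᵐ s ∂(volume.restrict (Ioc a b)), ‖F 0 s‖ ≤ M)
    {u : ℝ → E} (hu : AEStronglyMeasurable u (volume.restrict (Ioc a b)))
    (hC : ∀ᵐ s ∂(volume.restrict (Ioc a b)), ‖u s‖ ≤ C) :
    IntervalIntegrable (fun s => F (u s) s) volume a b ∧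
      ∀ᵐ s ∂(volume.restrict (Ioc a b)), ‖F (u s) s‖ ≤ L * C + M := by
  have hb : ∀ᵐ s ∂(volume.restrict (Ioc a b)), ‖F (u s) s‖ ≤ L * C + M := by
    filter_upwards [hL, hM, hC] with s h1 h2 h3
    have h4 := h1 (u s) 0
    have h5 : ‖F (u s) s‖ ≤ ‖F (u s) s - F 0 s‖ + ‖F 0 s‖ := by
      simpa using norm_add_le (F (u s) s - F 0 s) (F 0 s)
    rw [sub_zero] at h4
    have h6 := mul_le_mul_of_nonneg_left h3 hL0
    linarith
  refine ⟨?_, hb⟩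
  rw [intervalIntegrable_iff_integrableOn_Ioc_of_le hab]
  exact Integrable.of_bound (aesm_comp hm hL hu) _ hb

/-- Existence and uniqueness for the delayed integral equation
`u(t) = q₀ + ∫_a^t F(u(p(s)), s) ds` with a delay `p(s) ≤ s`, by a contraction argument. The fixed
point is sought as `u = W • v`, with the exponential weight `W`, in the space of continuous `v`. -/
theorem exists_unique_continuous_solution {E : Type*} [NormedAddCommGroup E] [NormedSpace ℝ E]
    [CompleteSpace E] {F : E → ℝ → E} {a b : ℝ} (hab : a ≤ b)
    (hm : ∀ x, AEStronglyMeasurable (F x) (volume.restrict (Ioc a b))) {L M : ℝ} (hL0 : 0 ≤ L)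
    (hL : ∀ᵐ s ∂(volume.restrict (Ioc a b)), ∀ x y, ‖F x s - F y s‖ ≤ L * ‖x - y‖)
    (hM : ∀ᵐ s ∂(volume.restrict (Ioc a b)), ‖F 0 s‖ ≤ M)
    {p : ℝ → ℝ} (hp : Measurable p) (hpa : ∀ s ∈ Icc a b, a ≤ p s) (hps : ∀ s ∈ Icc a b, p s ≤ s)
    (q₀ : E) :
    ∃ u : C(Icc a b, E),
      (∀ t, u t = q₀ + ∫ s in a..(t : ℝ), F (u (projIcc a b hab (p s))) s) ∧
      ∀ v : C(Icc a b, E),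
        (∀ t, v t = q₀ + ∫ s in a..(t : ℝ), F (v (projIcc a b hab (p s))) s) → v = u := by
  -- With the weight `exp (c * (t - a))`, `c = 2 * L + 1`, the Picard operator is a `1/2`-contraction.
  set c : ℝ := 2 * L + 1 with hc
  have hcpos : 0 < c := by positivity
  let W : ℝ → ℝ := fun t => Real.exp (c * (t - a))
  have hWc : Continuous W := by fun_prop
  have hWpos : ∀ t, 0 < W t := fun t => Real.exp_pos _
  have hWmono : ∀ s t, s ≤ t → W s ≤ W t := fun s t h => by
    refine Real.exp_le_exp.2 ?_
    have := mul_le_mul_of_nonneg_left h hcpos.le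
    linarith
  have hcoe : ∀ s ∈ Icc a b, ((projIcc a b hab (p s) : Icc a b) : ℝ) = p s := fun s hs => by
    rw [projIcc_of_mem hab ⟨hpa s hs, (hps s hs).trans hs.2⟩]
  have hint : ∀ v : C(Icc a b, E),
      IntervalIntegrable (fun s => F (v (projIcc a b hab (p s))) s) volume a b := by
    intro v
    refine (intervalIntegrable_comp (C := ‖v‖) hab hm hL0 hL hM
      (u := fun s => v (projIcc a b hab (p s))) ?_ ?_).1
    · have h1 : StronglyMeasurable (fun y => v (projIcc a b hab y)) :=
        (v.continuous.comp continuous_projIcc).stronglyMeasurable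
      exact (h1.comp_measurable hp).aestronglyMeasurable
    · exact Eventually.of_forall fun s => v.norm_coe_le_norm _
  let wt : C(Icc a b, E) → C(Icc a b, E) := fun v =>
    ⟨fun t => W t • v t, by fun_prop⟩
  have hcont : ∀ v : C(Icc a b, E), Continuous fun t : Icc a b =>
      (W t)⁻¹ • (q₀ + ∫ s in a..(t : ℝ), F (wt v (projIcc a b hab (p s))) s) := by
    intro v
    have h1 : ContinuousOn (fun t => ∫ s in a..t, F (wt v (projIcc a b hab (p s))) s)
        (Icc a b) := by
      have := intervalIntegral.continuousOn_primitive_interval' (hint (wt v)) left_mem_uIcc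
      rwa [uIcc_of_le hab] at this
    have h2 := continuousOn_iff_continuous_domRestrict.1 h1
    have h3 : Continuous fun t : Icc a b => (W t)⁻¹ :=
      (hWc.comp continuous_subtype_val).inv₀ fun t => (hWpos _).ne'
    exact h3.smul (continuous_const.add h2)
  let Φ : C(Icc a b, E) → C(Icc a b, E) := fun v => ⟨_, hcont v⟩
  have hΦ : ∀ v t, Φ v t =
    (W t)⁻¹ • (q₀ + ∫ s in a..(t : ℝ), F (wt v (projIcc a b hab (p s))) s) := fun v t => rfl
  have hcontr : ContractingWith (1 / 2) Φ := by
    refine ⟨by rw [← NNReal.coe_lt_coe]; norm_num, LipschitzWith.of_dist_le_mul fun v w => ?_⟩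
    rw [ContinuousMap.dist_le (by positivity)]
    intro t
    have hsub : Ioc a (t : ℝ) ⊆ Ioc a b := Ioc_subset_Ioc_right t.2.2
    have hi : ∀ v : C(Icc a b, E),
        IntervalIntegrable (fun s => F (v (projIcc a b hab (p s))) s) volume a t := fun v =>
      (hint v).mono_set (by rw [uIcc_of_le hab, uIcc_of_le t.2.1]; exact Icc_subset_Icc_right t.2.2)
    have hd : ∀ s, HasDerivAt (fun s => L / c * dist v w * W s) (L * dist v w * W s) s := by
      intro s
      have h1 : HasDerivAt W (Real.exp (c * (s - a)) * (c * 1)) s :=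
        (((hasDerivAt_id s).sub_const a).const_mul c).exp
      convert! h1.const_mul (L / c * dist v w) using 1
      simp only [W]
      field_simp
    have hI : ∫ s in a..(t : ℝ), L * dist v w * W s =
        L / c * dist v w * W t - L / c * dist v w * W a :=
      intervalIntegral.integral_eq_sub_of_hasDerivAt (fun s _ => hd s)
        ((by fun_prop : Continuous fun s => L * dist v w * W s).intervalIntegrable _ _)
    have hle : ‖(∫ s in a..(t : ℝ), F (wt v (projIcc a b hab (p s))) s) -
        ∫ s in a..(t : ℝ), F (wt w (projIcc a b hab (p s))) s‖ ≤ L / c * dist v w * W t := by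
      rw [← intervalIntegral.integral_sub (hi _) (hi _)]
      refine (intervalIntegral.norm_integral_le_of_norm_le t.2.1
        (g := fun s => L * dist v w * W s) ?_
        ((by fun_prop : Continuous fun s => L * dist v w * W s).intervalIntegrable _ _)).trans ?_
      · have hL' := (ae_restrict_iff' measurableSet_Ioc).1 hL
        filter_upwards [hL'] with s hs hst
        have hsI : s ∈ Icc a b := Ioc_subset_Icc_self (hsub hst)
        refine (hs (hsub hst) _ _).trans ?_
        have e : wt v (projIcc a b hab (p s)) - wt w (projIcc a b hab (p s)) =
            W (p s) • (v (projIcc a b hab (p s)) - w (projIcc a b hab (p s))) := by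
          simp only [wt, ContinuousMap.coe_mk, smul_sub, hcoe s hsI]
        rw [e, norm_smul, Real.norm_of_nonneg (hWpos _).le, mul_assoc, mul_comm (dist v w)]
        refine mul_le_mul_of_nonneg_left ?_ hL0
        refine mul_le_mul (hWmono _ _ (hps s hsI)) ?_ (norm_nonneg _) (hWpos _).le
        rw [← dist_eq_norm]
        exact ContinuousMap.dist_apply_le_dist _
      · rw [hI]
        have : 0 ≤ L / c * dist v w * W a := by have := hWpos a; positivity
        linarith
    rw [hΦ, hΦ, dist_eq_norm, ← smul_sub, norm_smul, add_sub_add_left_eq_sub, norm_inv,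
      Real.norm_of_nonneg (hWpos _).le, inv_mul_le_iff₀ (hWpos _)]
    refine hle.trans ?_
    have h1 : L / c ≤ 1 / 2 := by rw [div_le_iff₀ hcpos, hc]; linarith
    have h2 : ((1 / 2 : NNReal) : ℝ) = 1 / 2 := by norm_num
    rw [h2, mul_comm (W t)]
    exact mul_le_mul_of_nonneg_right (mul_le_mul_of_nonneg_right h1 dist_nonneg) (hWpos _).le
  have hfix : ∀ v : C(Icc a b, E), Φ v = v ↔
      ∀ t, wt v t = q₀ + ∫ s in a..(t : ℝ), F (wt v (projIcc a b hab (p s))) s := by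
    intro v
    rw [ContinuousMap.ext_iff]
    refine forall_congr' fun t => ?_
    rw [hΦ, inv_smul_eq_iff₀ (hWpos _).ne', eq_comm]
    rfl
  refine ⟨wt (ContractingWith.fixedPoint Φ hcontr),
    (hfix _).1 hcontr.fixedPoint_isFixedPt, fun v hv => ?_⟩
  let w : C(Icc a b, E) := ⟨fun t => (W t)⁻¹ • v t,
    ((hWc.comp continuous_subtype_val).inv₀ fun t => (hWpos _).ne').smul v.continuous⟩
  have hw : wt w = v := by
    ext1 t
    exact smul_inv_smul₀ (hWpos _).ne' _
  rw [← hw]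
  congr 1
  exact hcontr.fixedPoint_unique ((hfix w).2 (by rw [hw]; exact hv))


/-! ### The projection onto a time scale and the `Δ`-measure -/

/-- The backward projection onto the time scale: the largest point of `T` that is `≤ s`.
The cut-off `max s t₀` makes it constant, equal to `t₀ = min T`, to the left of `t₀`, so that it is
monotone on all of `ℝ`. -/
def tsProj (T : Set ℝ) (t₀ s : ℝ) : ℝ := sSup (T ∩ Iic (max s t₀))

section Proj

variable {T : Set ℝ} {t₀ : ℝ}

theorem tsProj_mem_aux (hT : IsClosed T) (h0 : IsLeast T t₀) (s : ℝ) :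
    tsProj T t₀ s ∈ T ∩ Iic (max s t₀) :=
  (hT.inter isClosed_Iic).csSup_mem ⟨t₀, h0.1, mem_Iic.2 (le_max_right _ _)⟩ ⟨_, fun _ h => h.2⟩

theorem tsProj_mem (hT : IsClosed T) (h0 : IsLeast T t₀) (s : ℝ) : tsProj T t₀ s ∈ T :=
  (tsProj_mem_aux hT h0 s).1

theorem tsProj_le (hT : IsClosed T) (h0 : IsLeast T t₀) {s : ℝ} (hs : t₀ ≤ s) :
    tsProj T t₀ s ≤ s := by
  have := (tsProj_mem_aux hT h0 s).2
  rwa [max_eq_left hs] at this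

theorem le_tsProj {t s : ℝ} (ht : t ∈ T) (hts : t ≤ s) : t ≤ tsProj T t₀ s :=
  le_csSup ⟨_, fun _ h => h.2⟩ ⟨ht, hts.trans (le_max_left _ _)⟩

theorem tsProj_self (hT : IsClosed T) (h0 : IsLeast T t₀) {t : ℝ} (ht : t ∈ T) :
    tsProj T t₀ t = t :=
  le_antisymm (tsProj_le hT h0 (h0.2 ht)) (le_tsProj ht le_rfl)

theorem tsProj_mono (h0 : IsLeast T t₀) : Monotone (tsProj T t₀) := fun _ t hst =>
  csSup_le_csSup ⟨max t t₀, fun _ h => h.2⟩ ⟨t₀, h0.1, mem_Iic.2 (le_max_right _ _)⟩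
    (inter_subset_inter_right _ (Iic_subset_Iic.2 (max_le_max_right _ hst)))

theorem tsProj_mem_Icc (hT : IsClosed T) (h0 : IsLeast T t₀) {s b : ℝ} (hs : s ∈ Icc t₀ b) :
    tsProj T t₀ s ∈ Icc t₀ b ∩ T :=
  ⟨⟨h0.2 (tsProj_mem hT h0 s), (tsProj_le hT h0 hs.1).trans hs.2⟩, tsProj_mem hT h0 s⟩

theorem tsSigma_mem (hT : IsClosed T) {t b : ℝ} (hb : b ∈ T) (htb : t < b) :
    tsSigma T t ∈ T := by
  have hne : {s | s ∈ T ∧ t < s}.Nonempty := ⟨b, hb, htb⟩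
  rw [tsSigma, if_pos hne]
  have h := csInf_mem_closure hne ⟨t, fun s hs => hs.2.le⟩
  exact hT.closure_subset_iff.2 (fun s hs => hs.1) h

theorem tsSigma_le {t s : ℝ} (hs : s ∈ T) (hts : t < s) : tsSigma T t ≤ s := by
  rw [tsSigma, if_pos ⟨s, hs, hts⟩]
  exact csInf_le ⟨t, fun s hs => hs.2.le⟩ ⟨hs, hts⟩

theorem le_tsSigma (t : ℝ) : t ≤ tsSigma T t := by
  unfold tsSigma
  split_ifs with h
  · exact le_csInf h fun s hs => hs.2.le
  · exact le_rfl

/-- A point outside `T` lies strictly between its projection and the forward jump of the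
latter; in particular its projection is right-scattered. -/
theorem tsProj_lt_lt (hT : IsClosed T) (h0 : IsLeast T t₀) {s b : ℝ} (hb : b ∈ T)
    (hs0 : t₀ ≤ s) (hsb : s < b) (hs : s ∉ T) :
    tsProj T t₀ s < s ∧ s < tsSigma T (tsProj T t₀ s) := by
  have h1 : tsProj T t₀ s < s := lt_of_le_of_ne (tsProj_le hT h0 hs0)
    fun h => hs (h ▸ tsProj_mem hT h0 s)
  refine ⟨h1, ?_⟩
  have hmem := tsSigma_mem hT hb (h1.trans hsb)
  refine lt_of_le_of_ne ?_ fun h => hs (h ▸ hmem)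
  rw [tsSigma, if_pos ⟨b, hb, h1.trans hsb⟩]
  refine le_csInf ⟨b, hb, h1.trans hsb⟩ fun r hr => ?_
  by_contra! hrs
  exact absurd (le_tsProj (t₀ := t₀) hr.1 hrs.le) (not_le.2 hr.2)

/-- On the gap `[t, σ(t))` the projection is constant. -/
theorem tsProj_eq_of_mem_Ico (hT : IsClosed T) (h0 : IsLeast T t₀) {t s : ℝ} (ht : t ∈ T)
    (hts : t ≤ s) (hs : s < tsSigma T t) : tsProj T t₀ s = t := by
  refine le_antisymm ?_ (le_tsProj ht hts)
  by_contra! h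
  have h1 := tsSigma_le (tsProj_mem hT h0 s) h
  exact absurd (h1.trans (tsProj_le hT h0 ((h0.2 ht).trans hts))) (not_le.2 hs)

theorem countable_rightScattered : {t | t ∈ T ∧ RightScattered T t}.Countable := by
  refine (countable_image_lt_image_Ioi_within T (id : ℝ → ℝ)).mono ?_
  rintro t ⟨ht, hs⟩
  exact ⟨ht, tsSigma T t, hs, fun y hy hty => tsSigma_le hy hty⟩

/-- A `Δ`-a.e. statement is a Lebesgue-a.e. statement on `T` together with its validity at every
right-scattered point. -/
theorem ae_delta_iff (hT : IsClosed T) {a b : ℝ} {P : ℝ → Prop} :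
    (∀ᵐ t ∂((deltaMeasure T).restrict (Ico a b ∩ T)), P t) ↔
      (∀ᵐ t, t ∈ T → t ∈ Ico a b → P t) ∧
        ∀ t ∈ T, t ∈ Ico a b → RightScattered T t → P t := by
  have : Countable {t : ℝ // t ∈ T ∧ RightScattered T t} :=
    (countable_rightScattered (T := T)).to_subtype
  rw [ae_restrict_iff' (measurableSet_Ico.inter hT.measurableSet), deltaMeasure,
    ae_add_measure_iff, ae_restrict_iff' hT.measurableSet, Measure.ae_sum_iff]
  refine and_congr ?_ ?_
  · refine eventually_congr (Eventually.of_forall fun t => ?_)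
    simp only [mem_inter_iff]
    tauto
  · constructor
    · intro h t ht htI hs
      have h1 := h ⟨t, ht, hs⟩
      rw [Measure.ae_ennreal_smul_measure_iff, ae_dirac_eq] at h1
      · exact h1 ⟨htI, ht⟩
      · exact (ENNReal.ofReal_pos.2 (sub_pos.2 hs)).ne'
    · rintro h ⟨t, ht, hs⟩
      refine Measure.ae_smul_measure ?_ _
      rw [ae_dirac_eq]
      exact fun hI => h t ht hI.1 hs

/-- The projection pulls `Δ`-null sets back to Lebesgue-null sets, because every point of `[t₀, b] \ T`
is projected to a right-scattered point. -/
theorem ae_comp_tsProj (hT : IsClosed T) (h0 : IsLeast T t₀) {b : ℝ} (hb : b ∈ T) {P : ℝ → Prop}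
    (h : ∀ᵐ t ∂((deltaMeasure T).restrict (Ico t₀ b ∩ T)), P t) :
    ∀ᵐ s ∂(volume.restrict (Ioc t₀ b)), P (tsProj T t₀ s) := by
  obtain ⟨h1, h2⟩ := (ae_delta_iff hT).1 h
  rw [← restrict_Ioo_eq_restrict_Ioc, ae_restrict_iff' measurableSet_Ioo]
  filter_upwards [h1] with s hs hsI
  by_cases hsT : s ∈ T
  · rw [tsProj_self hT h0 hsT]
    exact hs hsT ⟨hsI.1.le, hsI.2⟩
  · obtain ⟨h3, h4⟩ := tsProj_lt_lt hT h0 hb hsI.1.le hsI.2 hsT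
    have hm := tsProj_mem hT h0 s
    exact h2 _ hm ⟨h0.2 hm, h3.trans hsI.2⟩ (h3.trans h4)

theorem Ico_inter_subset_tsUpDomain {b : ℝ} (hb : b ∈ T) : Ico t₀ b ∩ T ⊆ tsUpDomain T :=
  fun _ ht => ⟨ht.2, fun hg => absurd (hg.2 hb) (not_le.2 ht.1.2)⟩

/-- Composition with the projection turns `Δ`-measurable functions into Lebesgue-measurable ones. -/
theorem aesm_comp_tsProj {n : ℕ} (hT : IsClosed T) (h0 : IsLeast T t₀) {b : ℝ} (hb : b ∈ T)
    {g : ℝ → EuclideanSpace ℝ (Fin n)}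
    (hg : AEMeasurable g ((deltaMeasure T).restrict (Ico t₀ b ∩ T))) :
    AEStronglyMeasurable (fun s => g (tsProj T t₀ s)) (volume.restrict (Ioc t₀ b)) := by
  have h1 : Measurable fun s => hg.mk g (tsProj T t₀ s) :=
    hg.measurable_mk.comp (tsProj_mono h0).measurable
  exact h1.aestronglyMeasurable.congr
    ((ae_comp_tsProj hT h0 hb hg.ae_eq_mk).mono fun s hs => hs.symm)

end Proj


/-! ### Absolutely continuous functions on a time scale -/

section AC

variable {n : ℕ} {T : Set ℝ} {t₀ b : ℝ}

theorem DeltaAC.sub {q r : ℝ → EuclideanSpace ℝ (Fin n)} (hq : DeltaAC T t₀ b q)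
    (hr : DeltaAC T t₀ b r) : DeltaAC T t₀ b (fun t => q t - r t) := by
  intro ε hε
  obtain ⟨δ₁, hδ₁, h₁⟩ := hq (ε / 2) (by positivity)
  obtain ⟨δ₂, hδ₂, h₂⟩ := hr (ε / 2) (by positivity)
  refine ⟨min δ₁ δ₂, by positivity, fun m u v hu hv huv hd hs => ?_⟩
  have e₁ := h₁ m u v hu hv huv hd (hs.trans_le (min_le_left _ _))
  have e₂ := h₂ m u v hu hv huv hd (hs.trans_le (min_le_right _ _))
  calc ∑ k ∈ Finset.range m, ‖q (v k) - r (v k) - (q (u k) - r (u k))‖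
      ≤ ∑ k ∈ Finset.range m, (‖q (v k) - q (u k)‖ + ‖r (v k) - r (u k)‖) := by
        refine Finset.sum_le_sum fun k _ => ?_
        rw [sub_sub_sub_comm]
        exact norm_sub_le _ _
    _ < ε := by rw [Finset.sum_add_distrib]; linarith

theorem DeltaAC.of_lipschitz {q : ℝ → EuclideanSpace ℝ (Fin n)} {K : ℝ} (hK : 0 ≤ K)
    (h : ∀ x ∈ Icc t₀ b ∩ T, ∀ y ∈ Icc t₀ b ∩ T, x ≤ y → ‖q y - q x‖ ≤ K * (y - x)) :
    DeltaAC T t₀ b q := by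
  intro ε hε
  refine ⟨ε / (K + 1), by positivity, fun m u v hu hv huv _ hs => ?_⟩
  calc ∑ k ∈ Finset.range m, ‖q (v k) - q (u k)‖
      ≤ ∑ k ∈ Finset.range m, (K + 1) * (v k - u k) := by
        refine Finset.sum_le_sum fun k hk => ?_
        have hk' := Finset.mem_range.1 hk
        have h1 := h _ (hu k hk') _ (hv k hk') (huv k hk')
        have h2 := huv k hk'
        linarith
    _ = (K + 1) * ∑ k ∈ Finset.range m, (v k - u k) := by rw [Finset.mul_sum]
    _ < (K + 1) * (ε / (K + 1)) := by gcongr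
    _ = ε := by field_simp

/-- Absolute continuity tested on families indexed by an arbitrary finite set. -/
theorem DeltaAC.finset {q : ℝ → EuclideanSpace ℝ (Fin n)} (hq : DeltaAC T t₀ b q)
    {ε : ℝ} (hε : 0 < ε) :
    ∃ δ > (0 : ℝ), ∀ (s : Finset ℕ) (u v : ℕ → ℝ),
      (∀ k ∈ s, u k ∈ Icc t₀ b ∩ T) → (∀ k ∈ s, v k ∈ Icc t₀ b ∩ T) →
      (∀ k ∈ s, u k ≤ v k) →
      (∀ i ∈ s, ∀ j ∈ s, i ≠ j → Disjoint (Icc (u i) (v i)) (Icc (u j) (v j))) →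
      (∑ k ∈ s, (v k - u k)) < δ → (∑ k ∈ s, ‖q (v k) - q (u k)‖) < ε := by
  obtain ⟨δ, hδ, h⟩ := hq ε hε
  refine ⟨δ, hδ, fun s u v hu hv huv hd hs => ?_⟩
  let e : ℕ → ℕ := fun k => if hk : k < s.card then (s.equivFin.symm ⟨k, hk⟩ : ℕ) else 0
  have he : ∀ k < s.card, e k ∈ s := fun k hk => by simp [e, hk]
  have hinj : ∀ i < s.card, ∀ j < s.card, i ≠ j → e i ≠ e j := by
    intro i hi j hj hij heq
    simp only [e, hi, hj, dif_pos] at heq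
    exact hij (Fin.mk.inj (s.equivFin.symm.injective (Subtype.ext heq)))
  have hsum : ∀ g : ℕ → ℝ, ∑ k ∈ Finset.range s.card, g (e k) = ∑ k ∈ s, g k := by
    intro g
    rw [Finset.sum_range, ← Finset.sum_coe_sort s g]
    refine Fintype.sum_equiv s.equivFin.symm _ _ fun i => ?_
    simp [e]
  rw [← hsum fun k => ‖q (v k) - q (u k)‖]
  refine h s.card (u ∘ e) (v ∘ e) (fun k hk => hu _ (he k hk)) (fun k hk => hv _ (he k hk))
    (fun k hk => huv _ (he k hk))
    (fun i hi j hj hij => hd _ (he i hi) _ (he j hj) (hinj i hi j hj hij)) ?_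
  have := hsum fun k => v k - u k
  simp only [Function.comp_apply]
  rwa [this]

/-- Uniform continuity: the case of a single interval. -/
theorem DeltaAC.uniform {q : ℝ → EuclideanSpace ℝ (Fin n)} (hq : DeltaAC T t₀ b q)
    {ε : ℝ} (hε : 0 < ε) :
    ∃ δ > (0 : ℝ), ∀ x ∈ Icc t₀ b ∩ T, ∀ y ∈ Icc t₀ b ∩ T, x ≤ y → y - x < δ →
      ‖q y - q x‖ < ε := by
  obtain ⟨δ, hδ, h⟩ := hq ε hε
  refine ⟨δ, hδ, fun x hx y hy hxy hd => ?_⟩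
  have := h 1 (fun _ => x) (fun _ => y) (fun _ _ => hx) (fun _ _ => hy) (fun _ _ => hxy)
    (fun i hi j hj hij => by omega) (by simpa using hd)
  simpa using this

theorem DeltaAC.continuousOn {q : ℝ → EuclideanSpace ℝ (Fin n)} (hq : DeltaAC T t₀ b q) :
    ContinuousOn q (Icc t₀ b ∩ T) := by
  rw [Metric.continuousOn_iff]
  intro x hx ε hε
  obtain ⟨δ, hδ, h⟩ := hq.uniform hε
  refine ⟨δ, hδ, fun y hy hyx => ?_⟩
  rw [Real.dist_eq, abs_lt] at hyx
  rcases le_total x y with hxy | hxy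
  · rw [dist_eq_norm]; exact h x hx y hy hxy hyx.2
  · rw [dist_comm, dist_eq_norm]; exact h y hy x hx hxy (by linarith)

/-- If `w` does not jump at right-scattered points, an increment of the piecewise constant
extension `w ∘ tsProj T t₀` over `[x, y]` is an increment of `w` over a subinterval with endpoints
in `T`, or it vanishes. -/
theorem comp_tsProj_eq_or {E : Type*} (hT : IsClosed T) (h0 : IsLeast T t₀) (hb : b ∈ T)
    {w : ℝ → E}
    (hw : ∀ r ∈ T, r ∈ Ico t₀ b → RightScattered T r → w (tsSigma T r) = w r)
    {x y : ℝ} (hx : t₀ ≤ x) (hxy : x ≤ y) (hy : y ≤ b) :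
    w (tsProj T t₀ x) = w (tsProj T t₀ y) ∨
      ∃ c ∈ T, x ≤ c ∧ c ≤ tsProj T t₀ y ∧ w (tsProj T t₀ x) = w c := by
  by_cases hxT : x ∈ T
  · right
    exact ⟨x, hxT, le_rfl, le_tsProj hxT hxy, by rw [tsProj_self hT h0 hxT]⟩
  have hxb : x < b := lt_of_le_of_ne (hxy.trans hy) fun h => hxT (h ▸ hb)
  obtain ⟨h1, h2⟩ := tsProj_lt_lt hT h0 hb hx hxb hxT
  have hm := tsProj_mem hT h0 x
  rcases (tsProj_mono h0 hxy).eq_or_lt with h | h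
  · left; rw [h]
  · right
    exact ⟨_, tsSigma_mem hT hb (h1.trans hxb), h2.le, tsSigma_le (tsProj_mem hT h0 y) h,
      (hw _ hm ⟨h0.2 hm, h1.trans hxb⟩ (h1.trans h2)).symm⟩

theorem DeltaAC.continuousOn_comp_tsProj (hT : IsClosed T) (h0 : IsLeast T t₀) (hb : b ∈ T)
    {w : ℝ → EuclideanSpace ℝ (Fin n)} (hac : DeltaAC T t₀ b w)
    (hw : ∀ r ∈ T, r ∈ Ico t₀ b → RightScattered T r → w (tsSigma T r) = w r) :
    ContinuousOn (fun s => w (tsProj T t₀ s)) (Icc t₀ b) := by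
  rw [Metric.continuousOn_iff]
  intro x hx ε hε
  obtain ⟨δ, hδ, h⟩ := hac.uniform hε
  refine ⟨δ, hδ, fun y hy hyx => ?_⟩
  have key : ∀ x ∈ Icc t₀ b, ∀ y ∈ Icc t₀ b, x ≤ y → y - x < δ →
      dist (w (tsProj T t₀ y)) (w (tsProj T t₀ x)) < ε := by
    intro x hx y hy hxy hd
    have hpy := tsProj_le hT h0 hy.1
    rcases comp_tsProj_eq_or hT h0 hb hw hx.1 hxy hy.2 with h1 | ⟨c, hc, hxc, hcy, h1⟩
    · rw [h1, dist_self]; exact hε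
    · rw [h1, dist_eq_norm]
      exact h c ⟨⟨hx.1.trans hxc, (hcy.trans hpy).trans hy.2⟩, hc⟩ _ (tsProj_mem_Icc hT h0 hy) hcy
        (by linarith)
  rw [Real.dist_eq, abs_lt] at hyx
  rcases le_total x y with hxy | hxy
  · exact key x hx y hy hxy hyx.2
  · rw [dist_comm]; exact key y hy x hx hxy (by linarith)

/-- If `w` is absolutely continuous on `T` and does not jump at right-scattered points, its
piecewise constant extension is absolutely continuous on the real interval `[t₀, b]`. -/
theorem DeltaAC.absolutelyContinuous_comp_tsProj (hT : IsClosed T) (h0 : IsLeast T t₀) (hb : b ∈ T)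
    {w : ℝ → EuclideanSpace ℝ (Fin n)} (hac : DeltaAC T t₀ b w)
    (hw : ∀ r ∈ T, r ∈ Ico t₀ b → RightScattered T r → w (tsSigma T r) = w r) :
    AbsolutelyContinuousOnInterval (fun s => w (tsProj T t₀ s)) t₀ b := by
  have htb : t₀ ≤ b := h0.2 hb
  have hcont := hac.continuousOn_comp_tsProj hT h0 hb hw
  set W : ℝ → EuclideanSpace ℝ (Fin n) := fun s => w (tsProj T t₀ s) with hW
  rw [absolutelyContinuousOnInterval_iff]
  intro ε hε
  obtain ⟨δ, hδ, h⟩ := hac.finset (half_pos hε)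
  refine ⟨δ, hδ, ?_⟩
  rintro ⟨m, I⟩ ⟨hI, hdisj⟩ hlen
  simp only [uIcc_of_le htb] at hI hdisj hlen ⊢
  let lo : ℕ → ℝ := fun k => min (I k).1 (I k).2
  let hi : ℕ → ℝ := fun k => max (I k).1 (I k).2
  have hlohi : ∀ k, lo k ≤ hi k := fun k => min_le_max
  have hlo : ∀ k ∈ Finset.range m, lo k ∈ Icc t₀ b := fun k hk =>
    ⟨le_min (hI k hk).1.1 (hI k hk).2.1, (min_le_left _ _).trans (hI k hk).1.2⟩
  have hhi : ∀ k ∈ Finset.range m, hi k ∈ Icc t₀ b := fun k hk =>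
    ⟨(hI k hk).1.1.trans (le_max_left _ _), max_le (hI k hk).1.2 (hI k hk).2.2⟩
  have hdist : ∀ k, dist (I k).1 (I k).2 = hi k - lo k := fun k => by
    rw [Real.dist_eq]; exact (max_sub_min_eq_abs' _ _).symm
  have hWdist : ∀ k, dist (W (I k).1) (W (I k).2) = ‖W (hi k) - W (lo k)‖ := fun k => by
    rcases le_total (I k).1 (I k).2 with h1 | h1
    · simp only [hi, lo, max_eq_right h1, min_eq_left h1]; rw [dist_comm, dist_eq_norm]
    · simp only [hi, lo, max_eq_left h1, min_eq_right h1]; rw [dist_eq_norm]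
  simp only [hdist] at hlen
  simp only [hWdist]
  -- The half-open intervals may share endpoints, so their left ends are moved slightly to the
  -- right to get disjoint closed intervals; continuity then removes the perturbation.
  have key : ∀ η ∈ Ioo (0 : ℝ) 1,
      ∑ k ∈ Finset.range m, ‖W (hi k) - W (lo k + η * (hi k - lo k))‖ ≤ ε / 2 := by
    intro η hη
    let x : ℕ → ℝ := fun k => lo k + η * (hi k - lo k)
    have hx1 : ∀ k, lo k ≤ x k := fun k => by
      have := mul_nonneg hη.1.le (sub_nonneg.2 (hlohi k)); simp only [x]; linarith
    have hx2 : ∀ k, x k ≤ hi k := fun k => by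
      have := mul_le_mul_of_nonneg_right hη.2.le (sub_nonneg.2 (hlohi k)); simp only [x]; linarith
    change ∑ k ∈ Finset.range m, ‖W (hi k) - W (x k)‖ ≤ ε / 2
    let s := (Finset.range m).filter fun k => ‖W (hi k) - W (x k)‖ ≠ 0
    have hs : ∑ k ∈ Finset.range m, ‖W (hi k) - W (x k)‖ = ∑ k ∈ s, ‖W (hi k) - W (x k)‖ :=
      (Finset.sum_filter_ne_zero _).symm
    have hex : ∀ k, ∃ c, k ∈ s → c ∈ T ∧ x k ≤ c ∧ c ≤ tsProj T t₀ (hi k) ∧ W (x k) = w c := by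
      intro k
      by_cases hk : k ∈ s
      · obtain ⟨hkm, hne⟩ := Finset.mem_filter.1 hk
        rcases comp_tsProj_eq_or hT h0 hb hw ((hlo k hkm).1.trans (hx1 k)) (hx2 k) (hhi k hkm).2
          with h1 | ⟨c, h1, h2, h3, h4⟩
        · exact absurd (by simp only [hW]; rw [h1, sub_self, norm_zero]) hne
        · exact ⟨c, fun _ => ⟨h1, h2, h3, h4⟩⟩
      · exact ⟨0, fun h => absurd h hk⟩
    choose c hc using hex
    have hsm : ∀ k ∈ s, k ∈ Finset.range m := fun k hk => (Finset.mem_filter.1 hk).1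
    have hpd : ∀ k ∈ s, tsProj T t₀ (hi k) ≤ hi k := fun k hk =>
      tsProj_le hT h0 (hhi k (hsm k hk)).1
    have hlt : ∀ k ∈ s, lo k < x k := by
      intro k hk
      have hne : lo k ≠ hi k := by
        intro heq
        refine (Finset.mem_filter.1 hk).2 ?_
        simp only [x, heq, sub_self, mul_zero, add_zero, norm_zero]
      have := mul_pos hη.1 (sub_pos.2 (lt_of_le_of_ne (hlohi k) hne))
      simp only [x]; linarith
    have hsub : ∀ k ∈ s, Icc (c k) (tsProj T t₀ (hi k)) ⊆ uIoc (I k).1 (I k).2 := by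
      intro k hk z hz
      exact ⟨(hlt k hk).trans_le ((hc k hk).2.1.trans hz.1), hz.2.trans (hpd k hk)⟩
    have h1 := h s c (fun k => tsProj T t₀ (hi k))
      (fun k hk => ⟨⟨h0.2 (hc k hk).1, ((hc k hk).2.2.1.trans (hpd k hk)).trans
        (hhi k (hsm k hk)).2⟩, (hc k hk).1⟩)
      (fun k hk => tsProj_mem_Icc hT h0 (hhi k (hsm k hk)))
      (fun k hk => (hc k hk).2.2.1)
      (fun i hi' j hj hij => (hdisj (Finset.mem_coe.2 (hsm i hi')) (Finset.mem_coe.2 (hsm j hj))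
        hij).mono (hsub i hi') (hsub j hj))
      (by
        refine lt_of_le_of_lt ?_ hlen
        calc ∑ k ∈ s, (tsProj T t₀ (hi k) - c k) ≤ ∑ k ∈ s, (hi k - lo k) := by
              refine Finset.sum_le_sum fun k hk => ?_
              have e1 := hpd k hk
              have e2 := (hc k hk).2.1
              have e3 := hx1 k
              linarith
          _ ≤ _ := Finset.sum_le_sum_of_subset_of_nonneg (Finset.filter_subset _ _)
              fun k _ _ => sub_nonneg.2 (hlohi k))
    rw [hs, Finset.sum_congr rfl fun k hk => by rw [(hc k hk).2.2.2]]
    exact h1.le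
  have hlim : Tendsto (fun η : ℝ => ∑ k ∈ Finset.range m, ‖W (hi k) - W (lo k + η * (hi k - lo k))‖)
      (nhdsWithin 0 (Ioo 0 1)) (nhds (∑ k ∈ Finset.range m, ‖W (hi k) - W (lo k)‖)) := by
    refine tendsto_finsetSum _ fun k hk => ?_
    refine (tendsto_const_nhds.sub ?_).norm
    have h1 := (hcont _ (hlo k hk)).tendsto
    refine h1.comp (tendsto_nhdsWithin_iff.2 ⟨?_, ?_⟩)
    · have h2 : Continuous fun η : ℝ => lo k + η * (hi k - lo k) := by fun_prop
      have h3 := h2.tendsto 0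
      simp only [zero_mul, add_zero] at h3
      exact h3.mono_left nhdsWithin_le_nhds
    · filter_upwards [self_mem_nhdsWithin] with η hη
      have e1 := mul_nonneg hη.1.le (sub_nonneg.2 (hlohi k))
      have e2 := mul_le_mul_of_nonneg_right hη.2.le (sub_nonneg.2 (hlohi k))
      have e3 := (hlo k hk).1
      have e4 := (hhi k hk).2
      constructor <;> linarith
  have hne : (nhdsWithin (0 : ℝ) (Ioo 0 1)).NeBot := left_nhdsWithin_Ioo_neBot zero_lt_one
  have := le_of_tendsto hlim (by filter_upwards [self_mem_nhdsWithin] with η hη using key η hη)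
  linarith

/-- At a right-dense point, a vanishing `Δ`-derivative of `w` gives a vanishing ordinary derivative
of the piecewise constant extension: nearby values of the extension are values of `w` at points of
`T` that are at least as close to `t`. -/
theorem hasDerivAt_comp_tsProj_of_rightDense (hT : IsClosed T) (h0 : IsLeast T t₀) (hb : b ∈ T)
    {w : ℝ → EuclideanSpace ℝ (Fin n)}
    (hw : ∀ r ∈ T, r ∈ Ico t₀ b → RightScattered T r → w (tsSigma T r) = w r)
    {t : ℝ} (ht : t ∈ T) (htI : t ∈ Ioo t₀ b) (hrd : tsSigma T t = t)
    (hd : HasDeltaDerivAt T w 0 t) : HasDerivAt (fun s => w (tsProj T t₀ s)) 0 t := by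
  rw [hasDerivAt_iff_isLittleO, Asymptotics.isLittleO_iff]
  intro ε hε
  obtain ⟨U, hU, h⟩ := hd ε hε
  obtain ⟨r, hr, hrU⟩ := Metric.mem_nhds_iff.1 hU
  filter_upwards [Metric.ball_mem_nhds t hr, Ioo_mem_nhds htI.1 htI.2] with s hs hsI
  rw [smul_zero, sub_zero, tsProj_self hT h0 ht]
  rw [Metric.mem_ball, Real.dist_eq, abs_lt] at hs
  suffices hc : w (tsProj T t₀ s) = w t ∨
      ∃ c ∈ T, |c - t| ≤ |s - t| ∧ |c - t| < r ∧ w (tsProj T t₀ s) = w c by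
    rcases hc with h1 | ⟨c, hc, h1, h2, h3⟩
    · rw [h1, sub_self, norm_zero]; positivity
    · have h4 := h c ⟨hrU (by rwa [Metric.mem_ball, Real.dist_eq]), hc⟩
      rw [hrd, smul_zero, sub_zero, abs_sub_comm, norm_sub_rev] at h4
      rw [h3]
      exact h4.trans (mul_le_mul_of_nonneg_left h1 hε.le)
  rcases le_total s t with hst | hst
  · rcases comp_tsProj_eq_or hT h0 hb hw hsI.1.le hst htI.2.le with h1 | ⟨c, hc, h1, h2, h3⟩
    · left; rw [h1, tsProj_self hT h0 ht]
    · rw [tsProj_self hT h0 ht] at h2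
      refine Or.inr ⟨c, hc, ?_, ?_, h3⟩
      · rw [abs_of_nonpos (by linarith), abs_of_nonpos (by linarith)]; linarith
      · rw [abs_lt]; constructor <;> linarith
  · have h1 := le_tsProj (t₀ := t₀) ht hst
    have h2 := tsProj_le hT h0 hsI.1.le
    refine Or.inr ⟨_, tsProj_mem hT h0 s, ?_, ?_, rfl⟩
    · rw [abs_of_nonneg (by linarith), abs_of_nonneg (by linarith)]; linarith
    · rw [abs_lt]; constructor <;> linarith

/-- The projection is locally constant off `T`. -/
theorem tsProj_eventuallyEq_of_notMem (hT : IsClosed T) (h0 : IsLeast T t₀) {s : ℝ}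
    (hs0 : t₀ < s) (hs : s ∉ T) : ∀ᶠ y in nhds s, tsProj T t₀ y = tsProj T t₀ s := by
  obtain ⟨r, hr, hrT⟩ := Metric.mem_nhds_iff.1 (hT.isOpen_compl.mem_nhds hs)
  filter_upwards [Metric.ball_mem_nhds s hr, Ioi_mem_nhds hs0] with y hy hy0
  have hball : ∀ z ∈ T, ¬ |z - s| < r := fun z hz hzr =>
    hrT (show z ∈ Metric.ball s r by rwa [Metric.mem_ball, Real.dist_eq]) hz
  rw [Metric.mem_ball, Real.dist_eq, abs_lt] at hy
  have key : ∀ x y, |x - s| < r → |y - s| < r → t₀ < y → x ≤ y →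
      tsProj T t₀ x = tsProj T t₀ y := by
    intro x y hx hy hy0 hxy
    refine le_antisymm (tsProj_mono h0 hxy) (le_tsProj (tsProj_mem hT h0 y) ?_)
    by_contra! hlt
    refine hball _ (tsProj_mem hT h0 y) ?_
    have h2 := tsProj_le hT h0 hy0.le
    rw [abs_lt] at hx hy ⊢
    constructor <;> linarith
  have hss : |s - s| < r := by simpa using hr
  rcases le_total y s with h | h
  · exact key y s (abs_lt.2 hy) hss hs0 h
  · exact (key s y hss (abs_lt.2 hy) hy0 h).symm

/-- The `Δ`-derivative determines the jump `q(σ(t)) - q(t)`: take `s = t` in its definition. -/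
theorem HasDeltaDerivAt.map_tsSigma {q : ℝ → EuclideanSpace ℝ (Fin n)}
    {q' : EuclideanSpace ℝ (Fin n)} {t : ℝ} (ht : t ∈ T) (h : HasDeltaDerivAt T q q' t) :
    q (tsSigma T t) = q t + (tsSigma T t - t) • q' := by
  suffices h1 : ‖q (tsSigma T t) - q t - (tsSigma T t - t) • q'‖ ≤ 0 by
    rw [norm_le_zero_iff, sub_eq_zero, sub_eq_iff_eq_add'] at h1
    exact h1
  refine le_of_forall_pos_le_add fun ε hε => ?_
  have hpos : 0 < |tsSigma T t - t| + 1 := by positivity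
  obtain ⟨U, hU, h⟩ := h (ε / (|tsSigma T t - t| + 1)) (by positivity)
  refine (h t ⟨mem_of_mem_nhds hU, ht⟩).trans ?_
  rw [zero_add, div_mul_eq_mul_div, div_le_iff₀ hpos]
  have := abs_nonneg (tsSigma T t - t)
  nlinarith

/-- An absolutely continuous function with vanishing `Δ`-derivative is constant. -/
theorem DeltaAC.eq_of_ae_hasDeltaDerivAt_zero (hT : IsClosed T) (h0 : IsLeast T t₀) (hb : b ∈ T)
    {w : ℝ → EuclideanSpace ℝ (Fin n)} (hac : DeltaAC T t₀ b w)
    (hd : ∀ᵐ t ∂((deltaMeasure T).restrict (Ico t₀ b ∩ T)), HasDeltaDerivAt T w 0 t)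
    {t : ℝ} (ht : t ∈ Icc t₀ b ∩ T) : w t = w t₀ := by
  obtain ⟨h1, h2⟩ := (ae_delta_iff hT).1 hd
  have htb : t₀ ≤ b := h0.2 hb
  have hw : ∀ r ∈ T, r ∈ Ico t₀ b → RightScattered T r → w (tsSigma T r) = w r := by
    intro r hr hrI hs
    have := (h2 r hr hrI hs).map_tsSigma hr
    rwa [smul_zero, add_zero] at this
  have hder : ∀ᵐ s, s ∈ uIcc t₀ b → HasDerivAt (fun s => w (tsProj T t₀ s)) 0 s := by
    rw [uIcc_of_le htb]
    have e1 : ∀ᵐ s : ℝ, s ≠ t₀ := by simp [ae_iff, measure_singleton]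
    have e2 : ∀ᵐ s : ℝ, s ≠ b := by simp [ae_iff, measure_singleton]
    have e3 : ∀ᵐ s : ℝ, ¬ (s ∈ T ∧ RightScattered T s) :=
      (countable_rightScattered (T := T)).ae_notMem volume
    filter_upwards [h1, e1, e2, e3] with s hs hs0 hsb hsr hsI
    have hsI' : s ∈ Ioo t₀ b := ⟨lt_of_le_of_ne hsI.1 hs0.symm, lt_of_le_of_ne hsI.2 hsb⟩
    by_cases hsT : s ∈ T
    · have hrd : tsSigma T s = s :=
        le_antisymm (not_lt.1 fun h => hsr ⟨hsT, h⟩) (le_tsSigma s)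
      exact hasDerivAt_comp_tsProj_of_rightDense hT h0 hb hw hsT hsI' hrd
        (hs hsT ⟨hsI.1, hsI'.2⟩)
    · refine (hasDerivAt_const s (w (tsProj T t₀ s))).congr_of_eventuallyEq ?_
      filter_upwards [tsProj_eventuallyEq_of_notMem hT h0 hsI'.1 hsT] with y hy
      rw [hy]
  obtain ⟨C, hC⟩ :=
    (hac.absolutelyContinuous_comp_tsProj hT h0 hb hw).const_of_ae_hasDerivAt_zero hder
  rw [uIcc_of_le htb] at hC
  have e1 := hC t ht.1
  have e2 := hC t₀ ⟨le_rfl, htb⟩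
  simp only [tsProj_self hT h0 ht.2, tsProj_self hT h0 h0.1] at e1 e2
  rw [e1, e2]

end AC


/-! ### The Cauchy problem as an integral equation -/

section Integral

variable {n : ℕ} {T : Set ℝ} {t₀ b : ℝ}

/-- Increments of a primitive over intervals with endpoints in `T`. -/
theorem norm_sub_le_of_primitive {g q : ℝ → EuclideanSpace ℝ (Fin n)}
    {q₀ : EuclideanSpace ℝ (Fin n)} {M : ℝ}
    (hint : IntervalIntegrable (fun s => g (tsProj T t₀ s)) volume t₀ b)
    (hM : ∀ᵐ s ∂(volume.restrict (Ioc t₀ b)), ‖g (tsProj T t₀ s)‖ ≤ M)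
    (hq : ∀ t ∈ Icc t₀ b ∩ T, q t = q₀ + ∫ s in t₀..t, g (tsProj T t₀ s))
    {x y : ℝ} (hx : x ∈ Icc t₀ b ∩ T) (hy : y ∈ Icc t₀ b ∩ T) (hxy : x ≤ y) :
    q y - q x = (∫ s in x..y, g (tsProj T t₀ s)) ∧ ‖q y - q x‖ ≤ M * (y - x) := by
  have hi : ∀ z ∈ Icc t₀ b, IntervalIntegrable (fun s => g (tsProj T t₀ s)) volume t₀ z :=
    fun z hz => hint.mono_set (by
      rw [uIcc_of_le hz.1, uIcc_of_le (hz.1.trans hz.2)]; exact Icc_subset_Icc_right hz.2)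
  have h1 : q y - q x = ∫ s in x..y, g (tsProj T t₀ s) := by
    rw [hq y hy, hq x hx, add_sub_add_left_eq_sub,
      intervalIntegral.integral_interval_sub_left (hi y hy.1) (hi x hx.1)]
  refine ⟨h1, ?_⟩
  rw [h1, ← abs_of_nonneg (sub_nonneg.2 hxy)]
  refine intervalIntegral.norm_integral_le_of_norm_le_const_ae ?_
  filter_upwards [(ae_restrict_iff' measurableSet_Ioc).1 hM] with s hs hsI
  rw [uIoc_of_le hxy] at hsI
  exact hs ⟨hx.1.1.trans_lt hsI.1, hsI.2.trans hy.1.2⟩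

/-- First half of the fundamental theorem of calculus on `T`: the primitive of a bounded function
`g`, written as a Lebesgue integral of `g ∘ tsProj T t₀`, is absolutely continuous and has
`Δ`-derivative `g` almost everywhere. -/
theorem primitive_ac_and_hasDeltaDerivAt (hT : IsClosed T) (h0 : IsLeast T t₀) (hb : b ∈ T)
    {g q : ℝ → EuclideanSpace ℝ (Fin n)} {q₀ : EuclideanSpace ℝ (Fin n)} {M : ℝ} (hM0 : 0 ≤ M)
    (hint : IntervalIntegrable (fun s => g (tsProj T t₀ s)) volume t₀ b)
    (hM : ∀ᵐ s ∂(volume.restrict (Ioc t₀ b)), ‖g (tsProj T t₀ s)‖ ≤ M)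
    (hq : ∀ t ∈ Icc t₀ b ∩ T, q t = q₀ + ∫ s in t₀..t, g (tsProj T t₀ s)) :
    DeltaAC T t₀ b q ∧
      ∀ᵐ t ∂((deltaMeasure T).restrict (Ico t₀ b ∩ T)), HasDeltaDerivAt T q (g t) t := by
  have htb : t₀ ≤ b := h0.2 hb
  refine ⟨DeltaAC.of_lipschitz hM0 fun x hx y hy hxy =>
    (norm_sub_le_of_primitive hint hM hq hx hy hxy).2, ?_⟩
  have hscat : ∀ t ∈ T, t ∈ Ico t₀ b → RightScattered T t → HasDeltaDerivAt T q (g t) t := by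
    intro t ht htI hs ε hε
    have hσT := tsSigma_mem hT hb htI.2
    have hσb := tsSigma_le hb htI.2
    have hs' : 0 < tsSigma T t - t := sub_pos.2 hs
    have htK : t ∈ Icc t₀ b ∩ T := ⟨⟨htI.1, htI.2.le⟩, ht⟩
    have hjump : q (tsSigma T t) - q t = (tsSigma T t - t) • g t := by
      rw [(norm_sub_le_of_primitive hint hM hq htK
        ⟨⟨htI.1.trans hs.le, hσb⟩, hσT⟩ hs.le).1, ← intervalIntegral.integral_const]
      refine intervalIntegral.integral_congr_ae ?_
      have e2 : ∀ᵐ s : ℝ, s ≠ tsSigma T t := by simp [ae_iff, measure_singleton]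
      filter_upwards [e2] with s hsne hsI
      rw [uIoc_of_le hs.le] at hsI
      rw [tsProj_eq_of_mem_Ico hT h0 ht hsI.1.le (lt_of_le_of_ne hsI.2 hsne)]
    have hK : 0 < M + ‖g t‖ + 1 := by positivity
    refine ⟨Ioo (t - ε * (tsSigma T t - t) / (M + ‖g t‖ + 1)) (tsSigma T t),
      Ioo_mem_nhds (by have : 0 < ε * (tsSigma T t - t) / (M + ‖g t‖ + 1) := by positivity
                       linarith) hs, ?_⟩
    rintro s ⟨hsU, hsT⟩
    have hst : s ≤ t := by
      by_contra! h
      exact absurd (tsSigma_le hsT h) (not_le.2 hsU.2)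
    have h1 := (norm_sub_le_of_primitive hint hM hq
      ⟨⟨h0.2 hsT, hst.trans htI.2.le⟩, hsT⟩ htK hst).2
    have e : q (tsSigma T t) - q s - (tsSigma T t - s) • g t =
        (q t - q s) - (t - s) • g t := by
      have : (tsSigma T t - s) • g t = (tsSigma T t - t) • g t + (t - s) • g t := by
        rw [← add_smul]; congr 1; ring
      rw [this, ← hjump]; abel
    rw [e, abs_of_nonneg (by linarith)]
    have h2 : ‖(q t - q s) - (t - s) • g t‖ ≤ (M + ‖g t‖) * (t - s) := by
      refine (norm_sub_le _ _).trans ?_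
      rw [norm_smul, Real.norm_of_nonneg (sub_nonneg.2 hst)]
      linarith
    have h3 : (t - s) * (M + ‖g t‖ + 1) ≤ ε * (tsSigma T t - t) := by
      rw [← le_div_iff₀ hK]; linarith [hsU.1]
    have h4 : ε * (tsSigma T t - t) ≤ ε * (tsSigma T t - s) := by gcongr
    linarith
  refine (ae_delta_iff hT).2 ⟨?_, hscat⟩
  have e1 : ∀ᵐ s : ℝ, s ≠ t₀ := by simp [ae_iff, measure_singleton]
  filter_upwards [hint.ae_hasDerivAt_integral, e1] with t hder hne ht htI
  by_cases hs : RightScattered T t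
  · exact hscat t ht htI hs
  have hσ : tsSigma T t = t := le_antisymm (not_lt.1 hs) (le_tsSigma t)
  have hd := hder (by rw [uIcc_of_le htb]; exact ⟨htI.1, htI.2.le⟩) t₀ left_mem_uIcc
  rw [tsProj_self hT h0 ht, hasDerivAt_iff_isLittleO, Asymptotics.isLittleO_iff] at hd
  intro ε hε
  refine ⟨_, inter_mem (hd hε) (Ioo_mem_nhds (lt_of_le_of_ne htI.1 hne.symm) htI.2), ?_⟩
  rintro s ⟨⟨hs1, hs2⟩, hsT⟩
  rw [hσ, hq t ⟨⟨htI.1, htI.2.le⟩, ht⟩, hq s ⟨⟨hs2.1.le, hs2.2.le⟩, hsT⟩, abs_sub_comm,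
    add_sub_add_left_eq_sub, ← norm_neg]
  refine le_trans (le_of_eq ?_) hs1
  congr 1
  rw [← neg_sub s t, neg_smul]
  abel

theorem HasDeltaDerivAt.sub {q r : ℝ → EuclideanSpace ℝ (Fin n)}
    {q' r' : EuclideanSpace ℝ (Fin n)} {t : ℝ}
    (hq : HasDeltaDerivAt T q q' t) (hr : HasDeltaDerivAt T r r' t) :
    HasDeltaDerivAt T (fun s => q s - r s) (q' - r') t := by
  intro ε hε
  obtain ⟨U, hU, h1⟩ := hq (ε / 2) (by positivity)
  obtain ⟨V, hV, h2⟩ := hr (ε / 2) (by positivity)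
  refine ⟨U ∩ V, inter_mem hU hV, ?_⟩
  rintro s ⟨⟨hsU, hsV⟩, hsT⟩
  have e : q (tsSigma T t) - r (tsSigma T t) - (q s - r s) - (tsSigma T t - s) • (q' - r') =
      (q (tsSigma T t) - q s - (tsSigma T t - s) • q') -
        (r (tsSigma T t) - r s - (tsSigma T t - s) • r') := by
    rw [smul_sub]; abel
  rw [e]
  refine (norm_sub_le _ _).trans ?_
  have := h1 s ⟨hsU, hsT⟩
  have := h2 s ⟨hsV, hsT⟩
  linarith

/-- `u` solves the integral form `u(t) = q₀ + ∫_{[t₀,t)} f(u(τ),τ) Δτ` of the Cauchy problem on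
`[t₀,b] ∩ T`. The `Δ`-integral is encoded as the Lebesgue integral over `[t₀,t]` of the integrand
composed with `tsProj T t₀`, so that only the values of `u` on `T` matter. -/
def IsIntSol (T : Set ℝ) (f : EuclideanSpace ℝ (Fin n) → ℝ → EuclideanSpace ℝ (Fin n)) (t₀ : ℝ)
    (q₀ : EuclideanSpace ℝ (Fin n)) (u : ℝ → EuclideanSpace ℝ (Fin n)) (b : ℝ) : Prop :=
  IntervalIntegrable (fun s => f (u (tsProj T t₀ s)) (tsProj T t₀ s)) volume t₀ b ∧
    ∀ t ∈ Icc t₀ b ∩ T, u t = q₀ + ∫ s in t₀..t, f (u (tsProj T t₀ s)) (tsProj T t₀ s)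

variable {f : EuclideanSpace ℝ (Fin n) → ℝ → EuclideanSpace ℝ (Fin n)}
  {q₀ : EuclideanSpace ℝ (Fin n)}

/-- The hypotheses on `f`, transported along the projection to the real interval `[t₀, b]`. -/
theorem exists_bounds_comp_tsProj (hT : IsClosed T) (h0 : IsLeast T t₀) (hb : b ∈ T)
    (hf : DeltaCaratheodory T univ f) (hinf : HInfty T univ f) (hlip : HglobLip T univ f) :
    ∃ L M : ℝ, 0 ≤ L ∧ 0 ≤ M ∧
      (∀ x, AEStronglyMeasurable (fun s => f x (tsProj T t₀ s)) (volume.restrict (Ioc t₀ b))) ∧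
      (∀ᵐ s ∂(volume.restrict (Ioc t₀ b)), ∀ x y,
        ‖f x (tsProj T t₀ s) - f y (tsProj T t₀ s)‖ ≤ L * ‖x - y‖) ∧
      ∀ᵐ s ∂(volume.restrict (Ioc t₀ b)), ‖f 0 (tsProj T t₀ s)‖ ≤ M := by
  have hsub := Ico_inter_subset_tsUpDomain (t₀ := t₀) hb
  obtain ⟨L, hL0, hL⟩ := hlip
  rcases (h0.2 hb).eq_or_lt with h | h
  · exact ⟨L, 0, hL0, le_rfl, by simp [← h], by simp [← h], by simp [← h]⟩
  obtain ⟨M, hM0, hM⟩ := hinf {0} (subset_univ _) isCompact_singleton t₀ h0.1 b hb h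
  refine ⟨L, M, hL0, hM0, fun x => ?_, ?_, ?_⟩
  · exact aesm_comp_tsProj hT h0 hb
      ((hf.1 x (mem_univ x)).mono_measure (Measure.restrict_mono hsub le_rfl))
  · have := ae_comp_tsProj hT h0 hb (ae_restrict_of_ae_restrict_of_subset hsub hL)
    exact this.mono fun s hs x y => hs x (mem_univ _) y (mem_univ _)
  · exact (ae_comp_tsProj hT h0 hb hM).mono fun s hs => hs 0 rfl

/-- On each `[t₀, b]` the integral equation has a bounded solution, unique on `[t₀, b] ∩ T`. -/
theorem exists_isIntSol_unique (hT : IsClosed T) (h0 : IsLeast T t₀) (hb : b ∈ T)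
    (hf : DeltaCaratheodory T univ f) (hinf : HInfty T univ f) (hlip : HglobLip T univ f)
    (q₀ : EuclideanSpace ℝ (Fin n)) :
    ∃ u : ℝ → EuclideanSpace ℝ (Fin n), IsIntSol T f t₀ q₀ u b ∧ (∃ C, ∀ t, ‖u t‖ ≤ C) ∧
      ∀ v, IsIntSol T f t₀ q₀ v b → EqOn v u (Icc t₀ b ∩ T) := by
  have htb : t₀ ≤ b := h0.2 hb
  obtain ⟨L, M, hL0, -, hm, hL, hM⟩ := exists_bounds_comp_tsProj hT h0 hb hf hinf hlip
  have hpm : Measurable (tsProj T t₀) := (tsProj_mono h0).measurable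
  obtain ⟨U, hU, huniq⟩ := exists_unique_continuous_solution (F := fun x s => f x (tsProj T t₀ s))
    htb hm hL0 hL hM hpm (fun s hs => (tsProj_mem_Icc hT h0 hs).1.1)
    (fun s hs => tsProj_le hT h0 hs.1) q₀
  refine ⟨fun t => U (projIcc t₀ b htb t), ⟨?_, fun t ht => ?_⟩,
    ⟨‖U‖, fun t => U.norm_coe_le_norm _⟩, fun v hv t ht => ?_⟩
  · refine (intervalIntegrable_comp (F := fun x s => f x (tsProj T t₀ s)) (C := ‖U‖) htb hm hL0 hL hM
      (u := fun s => U (projIcc t₀ b htb (tsProj T t₀ s))) ?_ ?_).1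
    · have h1 : StronglyMeasurable (fun y => U (projIcc t₀ b htb y)) :=
        (U.continuous.comp continuous_projIcc).stronglyMeasurable
      exact (h1.comp_measurable hpm).aestronglyMeasurable
    · exact Eventually.of_forall fun s => U.norm_coe_le_norm _
  · have h1 := hU ⟨t, ht.1⟩
    change U (projIcc t₀ b htb t) = _
    rw [projIcc_of_mem htb ht.1]
    exact h1
  · have hcont : ContinuousOn (fun t => q₀ + ∫ s in t₀..t, f (v (tsProj T t₀ s)) (tsProj T t₀ s))
        (Icc t₀ b) := by
      have := intervalIntegral.continuousOn_primitive_interval' hv.1 left_mem_uIcc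
      rw [uIcc_of_le htb] at this
      exact continuousOn_const.add this
    let V : C(Icc t₀ b, EuclideanSpace ℝ (Fin n)) :=
      ⟨_, continuousOn_iff_continuous_domRestrict.1 hcont⟩
    have hV : ∀ t (ht : t ∈ Icc t₀ b),
        V ⟨t, ht⟩ = q₀ + ∫ s in t₀..t, f (v (tsProj T t₀ s)) (tsProj T t₀ s) := fun t ht => rfl
    have hVv : ∀ t (ht : t ∈ Icc t₀ b ∩ T), V ⟨t, ht.1⟩ = v t := fun t ht => by
      rw [hV, hv.2 t ht]
    have hVU : V = U := by
      refine huniq V fun t => ?_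
      rw [hV t t.2]
      congr 1
      refine intervalIntegral.integral_congr fun s hs => ?_
      rw [uIcc_of_le t.2.1] at hs
      have hp := tsProj_mem_Icc hT h0 (show s ∈ Icc t₀ b from ⟨hs.1, hs.2.trans t.2.2⟩)
      rw [projIcc_of_mem htb hp.1, hVv _ hp]
    simp only
    rw [← hVv t ht, hVU, projIcc_of_mem htb ht.1]

theorem IsIntSol.congr (hT : IsClosed T) (h0 : IsLeast T t₀) {u v : ℝ → EuclideanSpace ℝ (Fin n)}
    (htb : t₀ ≤ b) (hu : IsIntSol T f t₀ q₀ u b) (h : EqOn v u (Icc t₀ b ∩ T)) :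
    IsIntSol T f t₀ q₀ v b := by
  have e : ∀ s ∈ Icc t₀ b, f (u (tsProj T t₀ s)) (tsProj T t₀ s) =
      f (v (tsProj T t₀ s)) (tsProj T t₀ s) := fun s hs => by
    rw [h (tsProj_mem_Icc hT h0 hs)]
  refine ⟨hu.1.congr fun s hs => ?_, fun t ht => ?_⟩
  · rw [uIoc_of_le htb] at hs
    exact e s (Ioc_subset_Icc_self hs)
  · rw [h ht, hu.2 t ht]
    congr 1
    refine intervalIntegral.integral_congr fun s hs => ?_
    rw [uIcc_of_le ht.1.1] at hs
    exact e s ⟨hs.1, hs.2.trans ht.1.2⟩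

theorem IsIntSol.mono {u : ℝ → EuclideanSpace ℝ (Fin n)} {c : ℝ} (htc : t₀ ≤ c) (hcb : c ≤ b)
    (hu : IsIntSol T f t₀ q₀ u b) : IsIntSol T f t₀ q₀ u c :=
  ⟨hu.1.mono_set (by
    rw [uIcc_of_le htc, uIcc_of_le (htc.trans hcb)]; exact Icc_subset_Icc_right hcb),
    fun t ht => hu.2 t ⟨⟨ht.1.1, ht.1.2.trans hcb⟩, ht.2⟩⟩

/-- The integrand of the integral equation is integrable and essentially bounded along every
function `u` that is continuous on `[t₀, b] ∩ T`. -/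
theorem integrand_bound (hT : IsClosed T) (h0 : IsLeast T t₀) (hb : b ∈ T)
    (hf : DeltaCaratheodory T univ f) (hinf : HInfty T univ f) (hlip : HglobLip T univ f)
    {u : ℝ → EuclideanSpace ℝ (Fin n)} (hu : ContinuousOn u (Icc t₀ b ∩ T)) :
    IntervalIntegrable (fun s => f (u (tsProj T t₀ s)) (tsProj T t₀ s)) volume t₀ b ∧
      ∃ K : ℝ, 0 ≤ K ∧ ∀ᵐ s ∂(volume.restrict (Ioc t₀ b)),
        ‖f (u (tsProj T t₀ s)) (tsProj T t₀ s)‖ ≤ K := by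
  have htb : t₀ ≤ b := h0.2 hb
  obtain ⟨L, M, hL0, hM0, hm, hL, hM⟩ := exists_bounds_comp_tsProj hT h0 hb hf hinf hlip
  obtain ⟨C, hC⟩ := (isCompact_Icc.inter_right hT).exists_bound_of_continuousOn hu
  have hC0 : 0 ≤ C := (norm_nonneg _).trans (hC t₀ ⟨⟨le_rfl, htb⟩, h0.1⟩)
  have hum : AEMeasurable u ((deltaMeasure T).restrict (Ico t₀ b ∩ T)) :=
    (hu.mono (inter_subset_inter_left _ Ico_subset_Icc_self)).aemeasurable
      (measurableSet_Ico.inter hT.measurableSet)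
  obtain ⟨h1, h2⟩ := intervalIntegrable_comp (F := fun x s => f x (tsProj T t₀ s)) (C := C) htb
    hm hL0 hL hM (aesm_comp_tsProj hT h0 hb hum)
    ((ae_restrict_iff' measurableSet_Ioc).2 (Eventually.of_forall fun s hs =>
      hC _ (tsProj_mem_Icc hT h0 (Ioc_subset_Icc_self hs))))
  exact ⟨h1, _, by positivity, h2⟩

/-- The Cauchy problem and its integral form are equivalent. -/
theorem isSolIcc_iff_isIntSol (hT : IsClosed T) (h0 : IsLeast T t₀) (hb : b ∈ T)
    (hf : DeltaCaratheodory T univ f) (hinf : HInfty T univ f) (hlip : HglobLip T univ f)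
    {q : ℝ → EuclideanSpace ℝ (Fin n)} :
    IsSolIcc T univ f t₀ q₀ q t₀ b ↔ IsIntSol T f t₀ q₀ q b := by
  have htb : t₀ ≤ b := h0.2 hb
  constructor
  · rintro ⟨-, hac, hq0, hder⟩
    obtain ⟨hint, K, hK0, hK⟩ := integrand_bound hT h0 hb hf hinf hlip hac.continuousOn
    refine ⟨hint, fun t ht => ?_⟩
    let r : ℝ → EuclideanSpace ℝ (Fin n) := fun t =>
      q₀ + ∫ s in t₀..t, f (q (tsProj T t₀ s)) (tsProj T t₀ s)
    obtain ⟨hrac, hrder⟩ := primitive_ac_and_hasDeltaDerivAt (q := r) (q₀ := q₀)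
      (g := fun t => f (q t) t) hT h0 hb hK0 hint hK fun t _ => rfl
    have hz : ∀ᵐ t ∂((deltaMeasure T).restrict (Ico t₀ b ∩ T)),
        HasDeltaDerivAt T (fun t => q t - r t) 0 t := by
      filter_upwards [hder, hrder] with s h1 h2
      simpa using h1.sub h2
    have := (hac.sub hrac).eq_of_ae_hasDeltaDerivAt_zero hT h0 hb hz ht
    have hr0 : r t₀ = q₀ := by simp [r]
    rw [hr0, hq0, sub_self, sub_eq_zero] at this
    exact this
  · intro hu
    have hcont : ContinuousOn q (Icc t₀ b ∩ T) := by
      have h1 := intervalIntegral.continuousOn_primitive_interval' hu.1 left_mem_uIcc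
      rw [uIcc_of_le htb] at h1
      exact ((continuousOn_const (c := q₀)).add (h1.mono inter_subset_left)).congr hu.2
    obtain ⟨hint, K, hK0, hK⟩ := integrand_bound hT h0 hb hf hinf hlip hcont
    obtain ⟨hac, hder⟩ := primitive_ac_and_hasDeltaDerivAt (q := q) (q₀ := q₀)
      (g := fun t => f (q t) t) hT h0 hb hK0 hint hK hu.2
    refine ⟨fun _ _ => mem_univ _, hac, ?_, hder⟩
    simpa using hu.2 t₀ ⟨⟨le_rfl, htb⟩, h0.1⟩

/-- The solutions on the intervals `[t₀, b]` glue together. -/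
theorem exists_global_isIntSol (hT : IsClosed T) (h0 : IsLeast T t₀)
    (hf : DeltaCaratheodory T univ f) (hinf : HInfty T univ f) (hlip : HglobLip T univ f)
    (q₀ : EuclideanSpace ℝ (Fin n)) :
    ∃ q : ℝ → EuclideanSpace ℝ (Fin n), ∀ b ∈ T, IsIntSol T f t₀ q₀ q b ∧
      ∀ v, IsIntSol T f t₀ q₀ v b → EqOn v q (Icc t₀ b ∩ T) := by
  have hex := fun b (hb : b ∈ T) => exists_isIntSol_unique hT h0 hb hf hinf hlip q₀
  choose! u hu _ huniq using hex
  have heq : ∀ b ∈ T, EqOn (fun t => u t t) (u b) (Icc t₀ b ∩ T) := fun b hb t ht =>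
    (huniq t ht.2 (u b) ((hu b hb).mono ht.1.1 ht.1.2) ⟨⟨ht.1.1, le_rfl⟩, ht.2⟩).symm
  refine ⟨fun t => u t t, fun b hb => ⟨(hu b hb).congr hT h0 (h0.2 hb) (heq b hb),
    fun v hv t ht => ?_⟩⟩
  rw [huniq b hb v hv ht, heq b hb ht]

/-- When `t₀ = min T`, the relation `a ⊴ t₀ ⊴ b` reduces to `a = t₀ < b`. -/
theorem Trile.of_isLeast (h0 : IsLeast T t₀) {a : ℝ} (ha : a ∈ T) (h : Trile T t₀ a b) :
    a = t₀ ∧ t₀ < b := by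
  rcases h with ⟨-, h1, h2⟩ | ⟨-, h1, -⟩ | ⟨h1, -⟩
  · exact ⟨h1, h2⟩
  · exact absurd (h0.2 ha) (not_le.2 h1)
  · exact absurd h0 h1

end Integral

theorem stmt4 {n : ℕ} (T : Set ℝ) (hTclosed : IsClosed T) (hTnontriv : T.Nontrivial)
    (f : EuclideanSpace ℝ (Fin n) → ℝ → EuclideanSpace ℝ (Fin n))
    (hf : DeltaCaratheodory T (univ : Set (EuclideanSpace ℝ (Fin n))) f)
    (t₀ : ℝ) (hmin : IsLeast T t₀) (q₀ : EuclideanSpace ℝ (Fin n))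
    (hinf : HInfty T (univ : Set (EuclideanSpace ℝ (Fin n))) f)
    (hlip : HglobLip T (univ : Set (EuclideanSpace ℝ (Fin n))) f) :
    ∃ (q : ℝ → EuclideanSpace ℝ (Fin n)) (I : Set ℝ),
      IsMaxSol T univ f t₀ q₀ q I ∧
      (∀ q₁ I₁, IsMaxSol T univ f t₀ q₀ q₁ I₁ → I₁ ∩ T = I ∩ T ∧ EqOn q₁ q (I ∩ T)) ∧
      I ∩ T = T := by
  obtain ⟨q, hq⟩ := exists_global_isIntSol hTclosed hmin hf hinf hlip q₀
  have hsol : IsSol T univ f t₀ q₀ q univ := by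
    obtain ⟨b, hb, hne⟩ := hTnontriv.exists_ne t₀
    refine ⟨⟨ordConnected_univ, t₀, ⟨mem_univ _, hmin.1⟩, b, ⟨mem_univ _, hb⟩,
      Or.inl ⟨hmin, rfl, lt_of_le_of_ne (hmin.2 hb) hne.symm⟩⟩, fun _ _ => mem_univ _,
      fun a ha b hb hab => ?_⟩
    obtain ⟨rfl, -⟩ := hab.of_isLeast hmin ha.2
    exact (isSolIcc_iff_isIntSol hTclosed hmin hb.2 hf hinf hlip).2 (hq b hb.2).1
  have huniq : ∀ q₁ I₁, IsSol T univ f t₀ q₀ q₁ I₁ → EqOn q₁ q (I₁ ∩ T) := by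
    rintro q₁ I₁ ⟨⟨-, a, ha, b, hb, hab⟩, -, h⟩ t ht
    obtain ⟨rfl, hlt⟩ := hab.of_isLeast hmin ha.2
    have key : ∀ c ∈ I₁ ∩ T, a < c → EqOn q₁ q (Icc a c ∩ T) := fun c hc hac =>
      (hq c hc.2).2 q₁ ((isSolIcc_iff_isIntSol hTclosed hmin hc.2 hf hinf hlip).1
        (h a ha c hc (Or.inl ⟨hmin, rfl, hac⟩)))
    rcases (hmin.2 ht.2).eq_or_lt with h1 | h1
    · rw [← h1]
      exact key b hb hlt ⟨⟨le_rfl, hlt.le⟩, ha.2⟩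
    · exact key t ht h1 ⟨⟨h1.le, le_rfl⟩, ht.2⟩
  refine ⟨q, univ, ⟨hsol, fun q₁ I₁ _ hext =>
    Subset.antisymm (inter_subset_inter_left _ (subset_univ _)) hext.1⟩, fun q₁ I₁ h => ?_,
    univ_inter T⟩
  have h1 := huniq q₁ I₁ h.1
  have h2 : I₁ ∩ T = univ ∩ T :=
    (h.2 q univ hsol ⟨inter_subset_inter_left _ (subset_univ _), h1.symm⟩).symm
  exact ⟨h2, h2 ▸ h1⟩

end
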